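/- Let Q be an ergodic CP-distribution on ℝ², π ∈ G(2,1), α = dim Q and β = dim πQ. For every ε > 0 there exists l_1 ∈ ℕ such that for all l ≥ l_1 there is a Borel set A of measures with Q(A) > 1 − ε, and for every μ ∈ A: μ({x : α − ε ≤ (1/l)·H(μ^{D_l(x)}, D_l) ≤ α + ε}) > 1 − ε and μ({x : β − ε ≤ (1/l)·H(π(μ^{D_l(x)}), D_l) ≤ β + ε}) > 1 − ε. -/

import Mathlib

/-!
By invariance, the level-`l` component `μ^{D_l(x)}` of a `Q`-random pair `(μ, x)` has the same
law as `μ` itself (`map_magn_succ`). So it suffices that the normalized entropies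
`(1/l) H(μ, D_l)` and `(1/l) H(πμ, D_l)` converge to `α` and `β` for `Q`-a.e. `μ`: convergence
a.e. gives convergence in measure, hence the set `R` of pairs `(μ, x)` whose level-`l` component
is bad has small `Q`-mass, and by adaptedness and Markov's inequality most `μ` give small mass to
the section of `R` at `μ` (`exists_good_measures`).

The convergence of entropies holds for every exact dimensional probability measure `ν` of bounded
support (`tendsto_entropy_of_exactDim`). Let `b_k(x)` be the mass of the ball of radius `2^{-k}`
about `x`, so that `u_k(x) = -(1/k) log₂ b_k(x)` tends to the dimension `d` a.e. Each cell is
contained in such a ball, so `(1/k) H ≥ ∫ min(u_k, d) dν`. Conversely each ball is covered by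
boundedly many cells, and Gibbs' inequality against the mixture of the neighbourhood-averaged
masses with the uniform distribution on the cells gives
`(1/k) H ≤ ∫ min(u_k + O(1/k), 2 + O(1/k)) dν`. Both integrands are bounded, so dominated
convergence finishes the proof.
-/

open MeasureTheory Set Filter
open scoped ENNReal Classical

noncomputable section

/-- A measure is exact dimensional with dimension `d`. -/
def ExactDim {X : Type*} [PseudoMetricSpace X] [MeasurableSpace X]
    (μ : Measure X) (d : ℝ) : Prop :=
  ∀ᵐ x ∂μ, Tendsto (fun r : ℝ => Real.log (μ (Metric.ball x r)).toReal / Real.log r)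
    (nhdsWithin 0 (Set.Ioi 0)) (nhds d)

/-- The half-open dyadic cell of generation `k` containing `x`. -/
def dcell {d : ℕ} (k : ℕ) (x : Fin d → ℝ) : Set (Fin d → ℝ) :=
  {y | ∀ i, ⌊(2 : ℝ) ^ k * y i⌋ = ⌊(2 : ℝ) ^ k * x i⌋}

/-- The homothety mapping the generation-`k` dyadic cell of `x` onto `[0,1)^d`. -/
def dscale {d : ℕ} (k : ℕ) (x : Fin d → ℝ) : (Fin d → ℝ) → (Fin d → ℝ) :=
  fun y i => (2 : ℝ) ^ k * y i - ⌊(2 : ℝ) ^ k * x i⌋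

/-- The component `μ^{D_k(x)}`: the normalized restriction of `μ` to the generation-`k` dyadic
cell of `x`, rescaled to the unit cube. -/
def component {d : ℕ} (μ : Measure (Fin d → ℝ)) (k : ℕ) (x : Fin d → ℝ) :
    Measure (Fin d → ℝ) :=
  (μ (dcell k x))⁻¹ • (μ.restrict (dcell k x)).map (dscale k x)

/-- The component `μ^{D_k(x)}` as a probability measure (with a junk value in the degenerate
case `μ(D_k(x)) ∈ {0, ∞}`). -/
def componentP {d : ℕ} (μ : Measure (Fin d → ℝ)) (k : ℕ) (x : Fin d → ℝ) :
    ProbabilityMeasure (Fin d → ℝ) :=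
  if h : IsProbabilityMeasure (component μ k x) then ⟨component μ k x, h⟩
  else ⟨Measure.dirac 0, by infer_instance⟩

/-- The σ-algebra on the space of probability measures inherited from the evaluation
σ-algebra on the space of measures. -/
instance {Ω : Type*} [MeasurableSpace Ω] : MeasurableSpace (ProbabilityMeasure Ω) :=
  inferInstanceAs (MeasurableSpace {μ : Measure Ω // IsProbabilityMeasure μ})

/-- The unit cube `[0,1)^d`. -/
def unitCube (d : ℕ) : Set (Fin d → ℝ) := {y | ∀ i, 0 ≤ y i ∧ y i < 1}

/-- The magnification operator `M(μ, x) = (μ^{D_1(x)}, S_{D_1(x)}(x))`. -/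
def CPmag {d : ℕ} :
    ProbabilityMeasure (Fin d → ℝ) × (Fin d → ℝ) →
      ProbabilityMeasure (Fin d → ℝ) × (Fin d → ℝ) :=
  fun p => (componentP (p.1 : Measure (Fin d → ℝ)) 1 p.2, dscale 1 p.2 p.2)

/-- A CP-distribution: a probability distribution on pairs (measure on the unit cube, point of
the unit cube) that is invariant under magnification and adapted (the point component is
distributed according to the measure component). -/
def IsCPDist {d : ℕ}
    (Q : Measure (ProbabilityMeasure (Fin d → ℝ) × (Fin d → ℝ))) : Prop :=
  IsProbabilityMeasure Q ∧
    (∀ᵐ p ∂Q, (p.1 : Measure (Fin d → ℝ)) (unitCube d) = 1 ∧ p.2 ∈ unitCube d) ∧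
    Q.map CPmag = Q ∧
    Q = (Q.map Prod.fst).bind fun ν => (ν : Measure (Fin d → ℝ)).map fun x => (ν, x)

/-- Ergodicity of the magnification system `(P([0,1)^d) × [0,1)^d, Q, M)`. -/
def CPErgodic {d : ℕ}
    (Q : Measure (ProbabilityMeasure (Fin d → ℝ) × (Fin d → ℝ))) : Prop :=
  ∀ S : Set (ProbabilityMeasure (Fin d → ℝ) × (Fin d → ℝ)),
    MeasurableSet S → CPmag ⁻¹' S = S → Q S = 0 ∨ Q S = 1

/-- The orthogonal projection of the plane onto the line of angle `θ`, identified with `ℝ`. -/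
def projDir (θ : ℝ) (x : Fin 2 → ℝ) : ℝ := x 0 * Real.cos θ + x 1 * Real.sin θ

/-- The summand `-(m · log₂ m)` of base-2 Shannon entropy. -/
def negMulLog2 (m : ℝ≥0∞) : ℝ := -(m.toReal * Real.logb 2 m.toReal)

/-- Base-2 Shannon entropy of a measure on `ℝ^d` with respect to the generation-`k`
dyadic partition. -/
def entD {d : ℕ} (μ : Measure (Fin d → ℝ)) (k : ℕ) : ℝ :=
  ∑' j : Fin d → ℤ, negMulLog2 (μ {y | ∀ i, ⌊(2 : ℝ) ^ k * y i⌋ = j i})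

/-- Base-2 Shannon entropy of a measure on `ℝ` with respect to the generation-`k`
dyadic partition. -/
def ent1 (μ : Measure ℝ) (k : ℕ) : ℝ :=
  ∑' j : ℤ, negMulLog2 (μ {y : ℝ | ⌊(2 : ℝ) ^ k * y⌋ = j})

/-! ### Exact dimension and entropy -/

/-- Gibbs' inequality; `q` need only have total mass at most that of `p`. -/
lemma gibbs_ineq {ι : Type*} (J : Finset ι) (p q : ι → ℝ) (hp : ∀ j ∈ J, 0 ≤ p j)
    (hq : ∀ j ∈ J, 0 < q j) (h : ∑ j ∈ J, q j ≤ ∑ j ∈ J, p j) :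
    ∑ j ∈ J, -(p j * Real.logb 2 (p j)) ≤ ∑ j ∈ J, p j * (-Real.logb 2 (q j)) := by
  have key : ∀ j ∈ J, -(p j * Real.log (p j)) - p j * (-Real.log (q j)) ≤ q j - p j := by
    intro j hj
    rcases (hp j hj).eq_or_lt with h0 | h0
    · rw [← h0]; simpa using (hq j hj).le
    · have h1 := Real.log_le_sub_one_of_pos (div_pos (hq j hj) h0)
      rw [Real.log_div (hq j hj).ne' h0.ne'] at h1
      have h2 := mul_le_mul_of_nonneg_left h1 h0.le
      have h3 : p j * (q j / p j - 1) = q j - p j := by field_simp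
      linarith
  have hs := Finset.sum_le_sum key
  rw [Finset.sum_sub_distrib, Finset.sum_sub_distrib] at hs
  have hl : (0 : ℝ) < Real.log 2 := Real.log_pos (by norm_num)
  have e1 : ∑ j ∈ J, -(p j * Real.logb 2 (p j))
      = (∑ j ∈ J, -(p j * Real.log (p j))) / Real.log 2 := by
    rw [Finset.sum_div]
    exact Finset.sum_congr rfl fun j _ => by rw [Real.logb]; ring
  have e2 : ∑ j ∈ J, p j * (-Real.logb 2 (q j))
      = (∑ j ∈ J, p j * (-Real.log (q j))) / Real.log 2 := by
    rw [Finset.sum_div]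
    exact Finset.sum_congr rfl fun j _ => by rw [Real.logb]; ring
  rw [e1, e2]
  exact div_le_div_of_nonneg_right (by linarith) hl.le

/-- A function of a label taking a.e. finitely many values has the obvious integral. -/
lemma integrable_and_integral_label {X ι : Type*} [MeasurableSpace X] [MeasurableSpace ι]
    [MeasurableSingletonClass ι] (ν : Measure X) [IsProbabilityMeasure ν] {c : X → ι}
    (hc : Measurable c) {J : Finset ι} (hJ : ∀ᵐ x ∂ν, c x ∈ J) (F : ι → ℝ) :
    Integrable (fun x => F (c x)) ν ∧
      ∫ x, F (c x) ∂ν = ∑ j ∈ J, ν.real (c ⁻¹' {j}) * F j := by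
  have hm : ∀ j, MeasurableSet (c ⁻¹' {j}) := fun j => hc (measurableSet_singleton j)
  have hae : (fun x => F (c x)) =ᵐ[ν]
      fun x => ∑ j ∈ J, (c ⁻¹' {j}).indicator (fun _ => F j) x := by
    filter_upwards [hJ] with x hx
    rw [Finset.sum_eq_single (c x)]
    · simp
    · intro j _ hj
      simp [Set.indicator, hj.symm]
    · exact fun h => absurd hx h
  have hi : ∀ j ∈ J, Integrable ((c ⁻¹' {j}).indicator (fun _ => F j)) ν :=
    fun j _ => (integrable_const _).indicator (hm j)
  refine ⟨(integrable_finsetSum J hi).congr hae.symm, ?_⟩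
  rw [integral_congr_ae hae, integral_finsetSum J hi]
  refine Finset.sum_congr rfl fun j _ => ?_
  rw [integral_indicator_const _ (hm j), smul_eq_mul]

lemma measurable_measureReal_ball {X : Type*} [PseudoMetricSpace X] [MeasurableSpace X]
    [OpensMeasurableSpace X] [SecondCountableTopology X] (ν : Measure X)
    [IsProbabilityMeasure ν] (r : ℝ) :
    Measurable fun x => (ν (Metric.ball x r)).toReal := by
  have hS : MeasurableSet {p : X × X | dist p.2 p.1 < r} :=
    measurableSet_lt (measurable_snd.dist measurable_fst) measurable_const
  exact (measurable_measure_prodMk_left hS).ennreal_toReal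

/-- An exact dimensional measure has entropy dimension equal to its dimension. The partitions are
given by labels `c k` in an abelian group; two points of a level-`k` cell are closer than `2^{-k}`
(`hcell`), only `O(4^k)` of them carry mass (`hcard`), and points closer than `2^{-k}` have labels
differing by an element of the fixed finite set `T` (`hT`). -/
theorem tendsto_entropy_of_exactDim {X ι : Type*} [PseudoMetricSpace X] [MeasurableSpace X]
    [OpensMeasurableSpace X] [SecondCountableTopology X]
    [AddCommGroup ι] [Countable ι] [MeasurableSpace ι] [MeasurableSingletonClass ι]
    (ν : Measure X) [IsProbabilityMeasure ν] (d : ℝ) (hd : ExactDim ν d)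
    (c : ℕ → X → ι) (hc : ∀ k, Measurable (c k)) (J : ℕ → Finset ι) (C : ℕ)
    (hJ : ∀ k, ∀ᵐ x ∂ν, c k x ∈ J k) (hcard : ∀ k, (J k).card ≤ C * 4 ^ k)
    (hcell : ∀ k x y, c k x = c k y → dist x y < (1 / 2 : ℝ) ^ k)
    (T : Finset ι) (hT : ∀ k x y, dist x y < (1 / 2 : ℝ) ^ k → c k x - c k y ∈ T) :
    Tendsto (fun k : ℕ => (1 / (k : ℝ)) * ∑ j ∈ J k, negMulLog2 (ν (c k ⁻¹' {j})))
      atTop (nhds d) := by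
  have hl : (0 : ℝ) < Real.log 2 := Real.log_pos (by norm_num)
  have hm : ∀ k j, MeasurableSet (c k ⁻¹' {j}) := fun k j => hc k (measurableSet_singleton j)
  -- `b k x` is the mass of the ball of radius `2^{-k}`, `u k x` its normalized logarithm
  set b : ℕ → X → ℝ := fun k x => (ν (Metric.ball x ((1 / 2 : ℝ) ^ k))).toReal with hb
  set u : ℕ → X → ℝ := fun k x => Real.log (b k x) / Real.log ((1 / 2 : ℝ) ^ k) with hu
  have hbm : ∀ k, Measurable (b k) := fun k => measurable_measureReal_ball ν _
  have hum : ∀ k, Measurable (u k) := fun k => (Real.measurable_log.comp (hbm k)).div_const _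
  have hr : Tendsto (fun k : ℕ => (1 / 2 : ℝ) ^ k) atTop (nhdsWithin 0 (Set.Ioi 0)) :=
    tendsto_nhdsWithin_iff.2 ⟨tendsto_pow_atTop_nhds_zero_of_lt_one (by norm_num) (by norm_num),
      Eventually.of_forall fun k => Set.mem_Ioi.2 (by positivity)⟩
  have hlim : ∀ᵐ x ∂ν, Tendsto (fun k => u k x) atTop (nhds d) := by
    filter_upwards [hd] with x hx using hx.comp hr
  have hlr : ∀ k : ℕ, Real.log ((1 / 2 : ℝ) ^ k) = -(k * Real.log 2) := by
    intro k; rw [Real.log_pow, one_div, Real.log_inv]; ring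
  have hb1 : ∀ k x, b k x ≤ 1 := fun k x => by
    simpa using ENNReal.toReal_mono ENNReal.one_ne_top (prob_le_one (μ := ν))
  have hu0 : ∀ k x, 0 ≤ u k x := by
    intro k x
    refine div_nonneg_of_nonpos (Real.log_nonpos ENNReal.toReal_nonneg (hb1 k x)) ?_
    rw [hlr]; simp; positivity
  set p : ℕ → ι → ℝ := fun k j => ν.real (c k ⁻¹' {j}) with hp
  have hppos : ∀ k, ∀ᵐ x ∂ν, 0 < p k (c k x) := by
    intro k
    have : ∀ j, ∀ᵐ x ∂ν, c k x = j → 0 < p k j := by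
      intro j
      by_cases h0 : 0 < p k j
      · exact Eventually.of_forall fun _ _ => h0
      · have h1 : p k j = 0 := le_antisymm (not_lt.1 h0) measureReal_nonneg
        have h2 : ν (c k ⁻¹' {j}) = 0 := by
          rwa [hp, measureReal_eq_zero_iff] at h1
        filter_upwards [measure_eq_zero_iff_ae_notMem.1 h2] with x hx hj
        exact absurd hj hx
    filter_upwards [ae_all_iff.2 this] with x hx using hx _ rfl
  have hpb : ∀ k x, p k (c k x) ≤ b k x := by
    intro k x
    refine ENNReal.toReal_mono (measure_ne_top _ _) (measure_mono fun y hy => ?_)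
    exact hcell k y x hy
  have hp1 : ∀ k, ∑ j ∈ J k, p k j = 1 := by
    intro k
    have := (integrable_and_integral_label ν (hc k) (hJ k) (fun _ => 1)).2
    simpa using this.symm
  have hH : ∀ k, ∑ j ∈ J k, negMulLog2 (ν (c k ⁻¹' {j}))
      = ∑ j ∈ J k, -(p k j * Real.logb 2 (p k j)) := fun k => rfl
  have hJne : ∀ k, 0 < (J k).card := by
    intro k
    rw [Finset.card_pos]
    by_contra h
    rw [Finset.not_nonempty_iff_eq_empty] at h
    have := hp1 k
    simp [h] at this
  have hCpos : 0 < C := by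
    have := (hJne 0).trans_le (hcard 0)
    simpa using this
  -- A cell lies in the ball of radius `2^{-k}` about any of its points, so it has smaller mass;
  -- truncating at `d` makes the integrands bounded.
  have lower : ∀ k : ℕ, 1 ≤ k → ∫ x, min (u k x) d ∂ν ≤
      (1 / (k : ℝ)) * ∑ j ∈ J k, negMulLog2 (ν (c k ⁻¹' {j})) := by
    intro k hk
    have hk0 : (0 : ℝ) < k := by exact_mod_cast hk
    obtain ⟨hi, he⟩ := integrable_and_integral_label ν (hc k) (hJ k)
      (fun j => (1 / (k : ℝ)) * (-Real.logb 2 (p k j)))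
    have : (1 / (k : ℝ)) * ∑ j ∈ J k, negMulLog2 (ν (c k ⁻¹' {j}))
        = ∫ x, (1 / (k : ℝ)) * (-Real.logb 2 (p k (c k x))) ∂ν := by
      rw [he, hH, Finset.mul_sum]
      exact Finset.sum_congr rfl fun j _ => by ring
    rw [this]
    refine integral_mono_ae ?_ hi ?_
    · refine Integrable.of_bound ((hum k).min measurable_const).aestronglyMeasurable |d|
        (Eventually.of_forall fun x => ?_)
      rw [Real.norm_eq_abs, abs_le]
      exact ⟨le_min (by linarith [abs_nonneg d, hu0 k x]) (neg_abs_le d),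
        (min_le_right _ _).trans (le_abs_self d)⟩
    · filter_upwards [hppos k] with x hx
      refine (min_le_left _ _).trans ?_
      have h1 := Real.log_le_log hx (hpb k x)
      simp only [hu]
      rw [hlr, Real.logb, div_neg, ← neg_div, div_le_iff₀ (by positivity)]
      have : 1 / (k : ℝ) * -(Real.log (p k (c k x)) / Real.log 2) * (k * Real.log 2)
        = - Real.log (p k (c k x)) := by field_simp
      rw [this]; linarith
  obtain ⟨x₀⟩ : Nonempty X := ⟨(hlim.exists).choose⟩
  have hT0 : (0 : ℝ) < T.card := by
    have : c 0 x₀ - c 0 x₀ ∈ T := hT 0 x₀ x₀ (by simp)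
    exact_mod_cast Finset.card_pos.2 ⟨_, this⟩
  set a : ℝ := Real.logb 2 (2 * T.card) with ha
  set e : ℝ := Real.logb 2 (2 * C) with he'
  have ha0 : 0 ≤ a := by
    refine Real.logb_nonneg (by norm_num) ?_
    have : (1 : ℝ) ≤ T.card := by exact_mod_cast (by exact_mod_cast hT0 : 0 < T.card)
    linarith
  have hCR : (1 : ℝ) ≤ C := by exact_mod_cast hCpos
  have he0 : 0 ≤ e := Real.logb_nonneg (by norm_num) (by linarith)
  set g : ℕ → X → ℝ := fun k x => min (a / k + u k x) (e / k + 2) with hg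
  have hgm : ∀ k, Measurable (g k) := fun k => ((hum k).const_add _).min measurable_const
  have hgb : ∀ k : ℕ, 1 ≤ k → ∀ x, |g k x| ≤ e + 2 := by
    intro k hk x
    have hk0 : (1 : ℝ) ≤ k := by exact_mod_cast hk
    have h1 : 0 ≤ g k x := le_min (add_nonneg (by positivity) (hu0 k x)) (by positivity)
    rw [abs_of_nonneg h1]
    refine (min_le_right _ _).trans ?_
    have := div_le_self he0 hk0
    linarith
  have upper : ∀ k : ℕ, 1 ≤ k →
      (1 / (k : ℝ)) * ∑ j ∈ J k, negMulLog2 (ν (c k ⁻¹' {j})) ≤ ∫ x, g k x ∂ν := by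
    intro k hk
    have hk0 : (0 : ℝ) < k := by exact_mod_cast hk
    have hN : (0 : ℝ) < (J k).card := by exact_mod_cast hJne k
    -- The comparison vector `q` of the Gibbs inequality is the half-half mixture of the
    -- neighbourhood averages of `p`, which control the ball masses, and of the uniform vector,
    -- which keeps `-log q` of order at most `k`.
    set s : ι → ℝ := fun j => ∑ t ∈ T, p k (j + t) with hs
    have hs0 : ∀ j, 0 ≤ s j := fun j => Finset.sum_nonneg fun t _ => measureReal_nonneg
    set q : ι → ℝ := fun j => s j / (2 * T.card) + 1 / (2 * (J k).card) with hq
    have hqpos : ∀ j, 0 < q j := fun j =>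
      add_pos_of_nonneg_of_pos (div_nonneg (hs0 j) (by positivity)) (by positivity)
    have hshift : ∀ t, ∑ j ∈ J k, p k (j + t) ≤ 1 := by
      intro t
      have hdis : Set.PairwiseDisjoint (↑(J k)) fun j => c k ⁻¹' {j + t} := by
        intro i _ j _ hij
        refine Disjoint.preimage _ ?_
        simpa using hij
      rw [hp, ← measureReal_biUnion_finset hdis (fun j _ => hm k _)]
      exact measureReal_le_one
    have hqsum : ∑ j ∈ J k, q j ≤ ∑ j ∈ J k, p k j := by
      rw [hp1, hq, Finset.sum_add_distrib, ← Finset.sum_div, Finset.sum_const, nsmul_eq_mul, hs,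
        Finset.sum_comm]
      have h1 : ∑ t ∈ T, ∑ j ∈ J k, p k (j + t) ≤ T.card := by
        simpa using Finset.sum_le_sum fun t (_ : t ∈ T) => hshift t
      have h2 : (∑ t ∈ T, ∑ j ∈ J k, p k (j + t)) / (2 * T.card) ≤ 1 / 2 := by
        rw [div_le_iff₀ (by positivity)]; linarith
      have h3 : ((J k).card : ℝ) * (1 / (2 * (J k).card)) = 1 / 2 := by field_simp
      linarith
    have hgib := gibbs_ineq (J k) (p k) q (fun _ _ => measureReal_nonneg) (fun j _ => hqpos j) hqsum
    obtain ⟨hi, he⟩ := integrable_and_integral_label ν (hc k) (hJ k)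
      (fun j => (1 / (k : ℝ)) * (-Real.logb 2 (q j)))
    have h1 : (1 / (k : ℝ)) * ∑ j ∈ J k, negMulLog2 (ν (c k ⁻¹' {j}))
        ≤ ∫ x, (1 / (k : ℝ)) * (-Real.logb 2 (q (c k x))) ∂ν := by
      rw [he, hH]
      refine (mul_le_mul_of_nonneg_left hgib (by positivity)).trans (le_of_eq ?_)
      rw [Finset.mul_sum]
      exact Finset.sum_congr rfl fun j _ => by ring
    refine h1.trans (integral_mono_ae hi ?_ ?_)
    · exact Integrable.of_bound (hgm k).aestronglyMeasurable (e + 2)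
        (Eventually.of_forall fun x => by rw [Real.norm_eq_abs]; exact hgb k hk x)
    · filter_upwards [hppos k] with x hx
      have hbs : b k x ≤ s (c k x) := by
        have hsub : Metric.ball x ((1 / 2 : ℝ) ^ k) ⊆ ⋃ t ∈ T, c k ⁻¹' {c k x + t} := by
          intro y hy
          simp only [Set.mem_iUnion]
          exact ⟨_, hT k y x hy, by simp⟩
        calc b k x ≤ ν.real (⋃ t ∈ T, c k ⁻¹' {c k x + t}) :=
              measureReal_mono hsub (measure_ne_top _ _)
          _ ≤ s (c k x) := measureReal_biUnion_finset_le _ _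
      have hb0 : 0 < b k x := hx.trans_le (hpb k x)
      refine le_min ?_ ?_
      · have h2 : b k x / (2 * T.card) ≤ q (c k x) := by
          have : b k x / (2 * T.card) ≤ s (c k x) / (2 * T.card) := by gcongr
          have : (0 : ℝ) < 1 / (2 * (J k).card) := by positivity
          simp only [hq]; linarith
        have h3 := Real.logb_le_logb_of_le (b := 2) (by norm_num) (by positivity) h2
        rw [Real.logb_div hb0.ne' (by positivity)] at h3
        have h4 : a / k + u k x = 1 / k * (a - Real.logb 2 (b k x)) := by
          simp only [hu]; rw [hlr, Real.logb]; field_simp; ring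
        rw [h4]; gcongr; linarith
      · have h2 : (2 * C * 4 ^ k : ℝ)⁻¹ ≤ q (c k x) := by
          have h5 : ((J k).card : ℝ) ≤ C * 4 ^ k := by exact_mod_cast hcard k
          have h6 : (2 * C * 4 ^ k : ℝ)⁻¹ ≤ 1 / (2 * (J k).card) := by
            rw [one_div]
            exact inv_anti₀ (by positivity) (by linarith)
          have : 0 ≤ s (c k x) / (2 * T.card) := div_nonneg (hs0 _) (by positivity)
          simp only [hq]; linarith
        have h3 := Real.logb_le_logb_of_le (b := 2) (by norm_num) (by positivity) h2
        have h7 : Real.logb 2 ((4 : ℝ) ^ k) = 2 * k := by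
          rw [show (4 : ℝ) = 2 ^ 2 by norm_num, ← pow_mul, Real.logb_pow, Real.logb_self_eq_one]
          · push_cast; ring
          · norm_num
        rw [Real.logb_inv, Real.logb_mul (by positivity) (by positivity), h7] at h3
        have h4 : e / k + 2 = 1 / k * (e + 2 * k) := by field_simp
        rw [h4]; gcongr; linarith
  have limlow : Tendsto (fun k => ∫ x, min (u k x) d ∂ν) atTop (nhds d) := by
    have := tendsto_integral_of_dominated_convergence (μ := ν) (F := fun k x => min (u k x) d)
      (f := fun _ => d) (fun _ => |d|)
      (fun k => ((hum k).min measurable_const).aestronglyMeasurable) (integrable_const _)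
      (fun k => Eventually.of_forall fun x => by
        rw [Real.norm_eq_abs, abs_le]
        exact ⟨le_min (by linarith [abs_nonneg d, hu0 k x]) (neg_abs_le d),
          (min_le_right _ _).trans (le_abs_self d)⟩)
      (by
        filter_upwards [hlim] with x hx
        simpa using hx.min (tendsto_const_nhds (x := d)))
    simpa using this
  have limup : Tendsto (fun k => ∫ x, g k x ∂ν) atTop (nhds (min d 2)) := by
    have := tendsto_integral_filter_of_dominated_convergence (μ := ν) (F := g) (l := atTop)
      (f := fun _ => min d 2) (fun _ => e + 2)
      (Eventually.of_forall fun k => (hgm k).aestronglyMeasurable)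
      (by
        filter_upwards [eventually_ge_atTop 1] with k hk
        exact Eventually.of_forall fun x => by rw [Real.norm_eq_abs]; exact hgb k hk x)
      (integrable_const _)
      (by
        filter_upwards [hlim] with x hx
        have h1 := (tendsto_const_div_atTop_nhds_zero_nat a).add hx
        have h2 := (tendsto_const_div_atTop_nhds_zero_nat e).add (tendsto_const_nhds (x := (2:ℝ)))
        simpa using h1.min h2)
    simpa using this
  have hmin : min d 2 = d := by
    refine le_antisymm (min_le_left _ _) (le_of_tendsto_of_tendsto limlow limup ?_)
    filter_upwards [eventually_ge_atTop 1] with k hk using (lower k hk).trans (upper k hk)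
  rw [hmin] at limup
  refine tendsto_of_tendsto_of_tendsto_of_le_of_le' limlow limup ?_ ?_
  · filter_upwards [eventually_ge_atTop 1] with k hk using lower k hk
  · filter_upwards [eventually_ge_atTop 1] with k hk using upper k hk

/-! ### Dyadic labels -/

/-- The index of the generation-`k` dyadic cell of `x`. -/
def label {d : ℕ} (k : ℕ) (x : Fin d → ℝ) : Fin d → ℤ := fun i => ⌊(2 : ℝ) ^ k * x i⌋

lemma measurable_label {d : ℕ} (k : ℕ) : Measurable (label (d := d) k) :=
  measurable_pi_lambda _ fun i => Int.measurable_floor.comp ((measurable_pi_apply i).const_mul _)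

lemma setOf_floor_eq {d : ℕ} (k : ℕ) (j : Fin d → ℤ) :
    {y : Fin d → ℝ | ∀ i, ⌊(2 : ℝ) ^ k * y i⌋ = j i} = label k ⁻¹' {j} := by
  ext y; simp [label, funext_iff]

lemma dcell_eq {d : ℕ} (k : ℕ) (x : Fin d → ℝ) : dcell k x = label k ⁻¹' {label k x} :=
  setOf_floor_eq k (label k x)

lemma abs_sub_lt_of_floor_eq (k : ℕ) {s t : ℝ} (h : ⌊(2 : ℝ) ^ k * s⌋ = ⌊(2 : ℝ) ^ k * t⌋) :
    |s - t| < (1 / 2 : ℝ) ^ k := by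
  have h1 := Int.abs_sub_lt_one_of_floor_eq_floor h
  rw [← mul_sub, abs_mul, abs_of_pos (by positivity : (0 : ℝ) < 2 ^ k)] at h1
  rw [one_div, inv_pow, ← one_div, lt_div_iff₀ (by positivity)]
  linarith

lemma floor_sub_mem (k : ℕ) {s t : ℝ} (h : |s - t| < (1 / 2 : ℝ) ^ k) :
    ⌊(2 : ℝ) ^ k * s⌋ - ⌊(2 : ℝ) ^ k * t⌋ ∈ Finset.Icc (-1 : ℤ) 1 := by
  rw [one_div, inv_pow, ← one_div, lt_div_iff₀ (by positivity)] at h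
  have h1 : |(2 : ℝ) ^ k * s - 2 ^ k * t| < 1 := by
    rw [← mul_sub, abs_mul, abs_of_pos (by positivity : (0 : ℝ) < 2 ^ k)]
    linarith
  rw [abs_lt] at h1
  have h2 : ⌊(2 : ℝ) ^ k * s⌋ ≤ ⌊(2 : ℝ) ^ k * t + 1⌋ := Int.floor_mono (by linarith)
  have h3 : ⌊(2 : ℝ) ^ k * t⌋ ≤ ⌊(2 : ℝ) ^ k * s + 1⌋ := Int.floor_mono (by linarith)
  rw [Int.floor_add_one] at h2 h3
  rw [Finset.mem_Icc]
  omega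

/-- Dyadic entropy of a measure on the unit square, as a finite sum; it agrees with `entD` on
such measures and is visibly measurable in the measure. -/
def entSq (ν : Measure (Fin 2 → ℝ)) (k : ℕ) : ℝ :=
  ∑ j ∈ Finset.Icc (0 : Fin 2 → ℤ) (fun _ => 2 ^ k), negMulLog2 (ν (label k ⁻¹' {j}))

/-- Dyadic entropy of a measure on the interval `[-2, 2]`, as a finite sum. -/
def entInt (ν : Measure ℝ) (k : ℕ) : ℝ :=
  ∑ j ∈ Finset.Icc (-(2 * 2 ^ k) : ℤ) (2 * 2 ^ k),
    negMulLog2 (ν ((fun y : ℝ => ⌊(2 : ℝ) ^ k * y⌋) ⁻¹' {j}))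

lemma label_mem_of_unitCube (k : ℕ) {x : Fin 2 → ℝ} (hx : x ∈ unitCube 2) :
    label k x ∈ Finset.Icc (0 : Fin 2 → ℤ) (fun _ => 2 ^ k) := by
  rw [Finset.mem_Icc]
  refine ⟨fun i => Int.floor_nonneg.2 (mul_nonneg (by positivity) (hx i).1), fun i => ?_⟩
  have h : (2 : ℝ) ^ k * x i ≤ ((2 ^ k : ℤ) : ℝ) := by
    push_cast
    exact mul_le_of_le_one_right (by positivity) (hx i).2.le
  exact (Int.floor_mono h).trans (Int.floor_intCast _).le

lemma projDir_floor_mem (k : ℕ) (θ : ℝ) {x : Fin 2 → ℝ} (hx : x ∈ unitCube 2) :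
    ⌊(2 : ℝ) ^ k * projDir θ x⌋ ∈ Finset.Icc (-(2 * 2 ^ k) : ℤ) (2 * 2 ^ k) := by
  have h0 := hx 0
  have h1 := hx 1
  have hab : |projDir θ x| ≤ 2 := by
    unfold projDir
    refine (abs_add_le _ _).trans ?_
    rw [abs_mul, abs_mul, abs_of_nonneg h0.1, abs_of_nonneg h1.1]
    have e0 := mul_le_mul h0.2.le (Real.abs_cos_le_one θ) (abs_nonneg _) zero_le_one
    have e1 := mul_le_mul h1.2.le (Real.abs_sin_le_one θ) (abs_nonneg _) zero_le_one
    linarith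
  rw [abs_le] at hab
  have hpos : (0 : ℝ) < 2 ^ k := by positivity
  rw [Finset.mem_Icc]
  constructor
  · rw [Int.le_floor]; push_cast; nlinarith
  · have h : (2 : ℝ) ^ k * projDir θ x ≤ ((2 * 2 ^ k : ℤ) : ℝ) := by push_cast; nlinarith
    exact (Int.floor_mono h).trans (Int.floor_intCast _).le

lemma measurable_projDir (θ : ℝ) : Measurable (projDir θ) := by
  unfold projDir; fun_prop

lemma measurable_floor_mul (k : ℕ) : Measurable fun y : ℝ => ⌊(2 : ℝ) ^ k * y⌋ :=
  Int.measurable_floor.comp (measurable_const_mul _)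

lemma entD_eq_entSq {ν : Measure (Fin 2 → ℝ)} (h : ∀ᵐ x ∂ν, x ∈ unitCube 2) (k : ℕ) :
    entD ν k = entSq ν k := by
  unfold entD entSq
  simp_rw [setOf_floor_eq]
  refine tsum_eq_sum fun j hj => ?_
  have : ν (label k ⁻¹' {j}) = 0 := by
    rw [measure_eq_zero_iff_ae_notMem]
    filter_upwards [h] with x hx hxj
    exact hj (hxj ▸ label_mem_of_unitCube k hx)
  simp [this, negMulLog2]

lemma ent1_eq_entInt {ν : Measure (Fin 2 → ℝ)} (h : ∀ᵐ x ∂ν, x ∈ unitCube 2) (θ : ℝ) (k : ℕ) :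
    ent1 (ν.map (projDir θ)) k = entInt (ν.map (projDir θ)) k := by
  refine tsum_eq_sum fun j hj => ?_
  have : ν.map (projDir θ) {y : ℝ | ⌊(2 : ℝ) ^ k * y⌋ = j} = 0 := by
    have hS : MeasurableSet {y : ℝ | ⌊(2 : ℝ) ^ k * y⌋ = j} :=
      measurable_floor_mul k (measurableSet_singleton j)
    rw [Measure.map_apply (measurable_projDir θ) hS, measure_eq_zero_iff_ae_notMem]
    filter_upwards [h] with x hx hxj
    exact hj (hxj ▸ projDir_floor_mem k θ hx)
  simp [this, negMulLog2]

lemma tendsto_entSq {ν : Measure (Fin 2 → ℝ)} [IsProbabilityMeasure ν]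
    (h : ∀ᵐ x ∂ν, x ∈ unitCube 2) {α : ℝ} (hα : ExactDim ν α) :
    Tendsto (fun k : ℕ => (1 / (k : ℝ)) * entSq ν k) atTop (nhds α) := by
  refine tendsto_entropy_of_exactDim ν α hα label measurable_label _ 4
    (fun k => h.mono fun x hx => label_mem_of_unitCube k hx) (fun k => ?_) (fun k x y hxy => ?_)
    (Finset.Icc (-1) 1) (fun k x y hxy => ?_)
  · rw [Pi.card_Icc]
    simp only [Fin.prod_univ_two, Int.card_Icc, Pi.zero_apply]
    have h1 : (1 : ℕ) ≤ 2 ^ k := Nat.one_le_two_pow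
    have h2 : ((2 : ℤ) ^ k + 1 - 0).toNat = 2 ^ k + 1 := by
      rw [sub_zero]; exact_mod_cast Int.toNat_natCast (2 ^ k + 1)
    rw [h2, show (4 : ℕ) ^ k = 2 ^ k * 2 ^ k by rw [← mul_pow]; norm_num]
    nlinarith
  · rw [dist_pi_lt_iff (by positivity)]
    exact fun i => abs_sub_lt_of_floor_eq k (congrFun hxy i)
  · rw [dist_pi_lt_iff (by positivity)] at hxy
    have hi := fun i => Finset.mem_Icc.1 (floor_sub_mem k (hxy i))
    exact Finset.mem_Icc.2 ⟨fun i => (hi i).1, fun i => (hi i).2⟩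

lemma tendsto_entInt {ν : Measure (Fin 2 → ℝ)} [IsProbabilityMeasure ν]
    (h : ∀ᵐ x ∂ν, x ∈ unitCube 2) (θ : ℝ) {β : ℝ} (hβ : ExactDim (ν.map (projDir θ)) β) :
    Tendsto (fun k : ℕ => (1 / (k : ℝ)) * entInt (ν.map (projDir θ)) k) atTop (nhds β) := by
  have := Measure.isProbabilityMeasure_map (μ := ν) (measurable_projDir θ).aemeasurable
  refine tendsto_entropy_of_exactDim _ β hβ (fun k y => ⌊(2 : ℝ) ^ k * y⌋) measurable_floor_mul
    _ 5 (fun k => ?_) (fun k => ?_) (fun k x y hxy => abs_sub_lt_of_floor_eq k hxy)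
    (Finset.Icc (-1) 1) (fun k x y hxy => floor_sub_mem k hxy)
  · refine (ae_map_iff (measurable_projDir θ).aemeasurable
      (measurable_floor_mul k (Finset.measurableSet _))).2 ?_
    exact h.mono fun x hx => projDir_floor_mem k θ hx
  · rw [Int.card_Icc]
    have h1 : (1 : ℕ) ≤ 2 ^ k := Nat.one_le_two_pow
    have h2 : (2 * (2 : ℤ) ^ k + 1 - -(2 * 2 ^ k)).toNat = 4 * 2 ^ k + 1 := by
      rw [← Int.toNat_natCast (4 * 2 ^ k + 1)]
      congr 1
      push_cast
      ring
    rw [h2, show (4 : ℕ) ^ k = 2 ^ k * 2 ^ k by rw [← mul_pow]; norm_num]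
    nlinarith

/-! ### Components and the iterated magnification -/

/-- A measure regarded as a probability measure, with value `δ_0` if it is not one. -/
def toProb {d : ℕ} (μ : Measure (Fin d → ℝ)) : ProbabilityMeasure (Fin d → ℝ) :=
  if h : IsProbabilityMeasure μ then ⟨μ, h⟩ else ⟨Measure.dirac 0, by infer_instance⟩

lemma componentP_eq_toProb {d : ℕ} (μ : Measure (Fin d → ℝ)) (k : ℕ) (x : Fin d → ℝ) :
    componentP μ k x = toProb (component μ k x) := rfl

lemma toProb_coe {d : ℕ} (μ : Measure (Fin d → ℝ)) [h : IsProbabilityMeasure μ] :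
    (toProb μ : Measure (Fin d → ℝ)) = μ := by
  have : toProb μ = ⟨μ, h⟩ := dif_pos h
  rw [this]; rfl

lemma measurable_toProb {d : ℕ} : Measurable (toProb (d := d)) := by
  have hP : MeasurableSet {μ : Measure (Fin d → ℝ) | IsProbabilityMeasure μ} := by
    simp only [isProbabilityMeasure_iff]
    exact Measure.measurable_coe MeasurableSet.univ (measurableSet_singleton 1)
  have h : Measurable fun μ : Measure (Fin d → ℝ) => (toProb μ : Measure (Fin d → ℝ)) := by
    have : (fun μ : Measure (Fin d → ℝ) => (toProb μ : Measure (Fin d → ℝ)))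
        = fun μ => if IsProbabilityMeasure μ then μ else Measure.dirac 0 := by
      funext μ
      split_ifs with h
      · exact toProb_coe μ
      · have : toProb μ = ⟨Measure.dirac 0, by infer_instance⟩ := dif_neg h
        rw [this]; rfl
    rw [this]
    exact Measurable.ite hP measurable_id measurable_const
  exact measurable_comap_iff.2 h

/-- The component of `μ` on the cell with index `j`. -/
def compIdx {d : ℕ} (k : ℕ) (μ : Measure (Fin d → ℝ)) (j : Fin d → ℤ) : Measure (Fin d → ℝ) :=
  (μ (label k ⁻¹' {j}))⁻¹ • (μ.restrict (label k ⁻¹' {j})).map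
    fun y i => (2 : ℝ) ^ k * y i - j i

lemma measurable_dscale {d : ℕ} (k : ℕ) (x : Fin d → ℝ) : Measurable (dscale k x) :=
  measurable_pi_lambda _ fun i => ((measurable_pi_apply i).const_mul _).sub_const _

lemma measurableSet_dcell {d : ℕ} (k : ℕ) (x : Fin d → ℝ) : MeasurableSet (dcell k x) := by
  rw [dcell_eq]; exact measurable_label k (measurableSet_singleton _)

lemma component_eq_compIdx {d : ℕ} (k : ℕ) (μ : Measure (Fin d → ℝ)) (x : Fin d → ℝ) :
    component μ k x = compIdx k μ (label k x) := by
  unfold compIdx component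
  rw [dcell_eq]
  rfl

lemma measurable_toMeasure {Ω : Type*} [MeasurableSpace Ω] :
    Measurable fun μ : ProbabilityMeasure Ω => (μ : Measure Ω) :=
  measurable_subtype_coe

lemma measurable_compIdx {d : ℕ} (k : ℕ) (j : Fin d → ℤ) :
    Measurable fun μ : Measure (Fin d → ℝ) => compIdx k μ j := by
  have hL : MeasurableSet (label (d := d) k ⁻¹' {j}) :=
    measurable_label k (measurableSet_singleton _)
  have hS : Measurable fun (y : Fin d → ℝ) i => (2 : ℝ) ^ k * y i - j i :=
    measurable_pi_lambda _ fun i => ((measurable_pi_apply i).const_mul _).sub_const _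
  refine Measure.measurable_of_measurable_coe _ fun s hs => ?_
  simp only [compIdx, Measure.smul_apply, smul_eq_mul]
  simp_rw [Measure.map_apply hS hs, Measure.restrict_apply (hS hs)]
  exact (Measure.measurable_coe hL).inv.mul (Measure.measurable_coe ((hS hs).inter hL))

lemma measurable_componentP {d : ℕ} (k : ℕ) :
    Measurable fun p : ProbabilityMeasure (Fin d → ℝ) × (Fin d → ℝ) =>
      componentP (p.1 : Measure (Fin d → ℝ)) k p.2 := by
  have h : Measurable fun p : Measure (Fin d → ℝ) × (Fin d → ℤ) => compIdx k p.1 p.2 :=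
    measurable_from_prod_countable_left fun j => measurable_compIdx k j
  have h2 : Measurable fun p : ProbabilityMeasure (Fin d → ℝ) × (Fin d → ℝ) =>
      ((p.1 : Measure (Fin d → ℝ)), label k p.2) :=
    (measurable_toMeasure.comp measurable_fst).prodMk ((measurable_label k).comp measurable_snd)
  have h3 := measurable_toProb.comp (h.comp h2)
  convert h3 using 1
  funext p
  simp only [Function.comp, componentP_eq_toProb, component_eq_compIdx]

/-- The `k`-step magnification `(μ, x) ↦ (μ^{D_k(x)}, S_{D_k(x)}(x))`. -/
def magn {d : ℕ} (k : ℕ) (p : ProbabilityMeasure (Fin d → ℝ) × (Fin d → ℝ)) :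
    ProbabilityMeasure (Fin d → ℝ) × (Fin d → ℝ) :=
  (componentP (p.1 : Measure (Fin d → ℝ)) k p.2, dscale k p.2 p.2)

lemma measurable_magn {d : ℕ} (k : ℕ) : Measurable (magn (d := d) k) := by
  refine (measurable_componentP k).prodMk (measurable_pi_lambda _ fun i => ?_)
  have h : Measurable fun p : ProbabilityMeasure (Fin d → ℝ) × (Fin d → ℝ) =>
    (2 : ℝ) ^ k * p.2 i := ((measurable_pi_apply i).comp measurable_snd).const_mul _
  exact h.sub ((measurable_of_countable (fun n : ℤ => (n : ℝ))).comp (Int.measurable_floor.comp h))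

lemma component_isProb {d : ℕ} (k : ℕ) (μ : Measure (Fin d → ℝ)) [IsProbabilityMeasure μ]
    {x : Fin d → ℝ} (hx : μ (dcell k x) ≠ 0) : IsProbabilityMeasure (component μ k x) := by
  constructor
  rw [component, Measure.smul_apply, Measure.map_apply (measurable_dscale k x) MeasurableSet.univ]
  simp [ENNReal.inv_mul_cancel hx (measure_ne_top _ _)]

lemma componentP_coe {d : ℕ} (k : ℕ) (μ : Measure (Fin d → ℝ)) [IsProbabilityMeasure μ]
    {x : Fin d → ℝ} (hx : μ (dcell k x) ≠ 0) :
    (componentP μ k x : Measure (Fin d → ℝ)) = component μ k x := by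
  have := component_isProb k μ hx
  rw [componentP_eq_toProb, toProb_coe]

lemma measurableSet_unitCube {d : ℕ} : MeasurableSet (unitCube d) := by
  have : unitCube d = Set.univ.pi fun _ => Set.Ico (0 : ℝ) 1 := by
    ext y; simp [unitCube]
  rw [this]; exact MeasurableSet.univ_pi fun _ => measurableSet_Ico

lemma component_unitCube {d : ℕ} (k : ℕ) (μ : Measure (Fin d → ℝ)) [IsProbabilityMeasure μ]
    (x : Fin d → ℝ) :
    ∀ᵐ y ∂component μ k x, y ∈ unitCube d := by
  refine Measure.ae_smul_measure ?_ _
  refine (ae_map_iff (measurable_dscale k x).aemeasurable measurableSet_unitCube).2 ?_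
  refine (ae_restrict_iff' (measurableSet_dcell k x)).2 (Eventually.of_forall fun y hy i => ?_)
  have h := hy i
  have h1 := Int.floor_le ((2 : ℝ) ^ k * y i)
  have h2 := Int.lt_floor_add_one ((2 : ℝ) ^ k * y i)
  rw [h] at h1 h2
  simp only [dscale]
  constructor <;> linarith

lemma label_dscale {d : ℕ} (k m : ℕ) (x y : Fin d → ℝ) (i : Fin d) :
    ⌊(2 : ℝ) ^ m * dscale k x y i⌋ = ⌊(2 : ℝ) ^ (k + m) * y i⌋ - 2 ^ m * ⌊(2 : ℝ) ^ k * x i⌋ := by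
  rw [← Int.floor_sub_intCast]
  congr 1
  simp only [dscale]
  push_cast
  ring

lemma dcell_add_subset {d : ℕ} (k m : ℕ) (x : Fin d → ℝ) : dcell (k + m) x ⊆ dcell k x := by
  intro y hy i
  have key : ∀ t : ℝ, ⌊(2 : ℝ) ^ k * t⌋ = ⌊(2 : ℝ) ^ (k + m) * t⌋ / 2 ^ m := by
    intro t
    have := Int.floor_div_natCast ((2 : ℝ) ^ (k + m) * t) (2 ^ m)
    push_cast at this
    rw [← this]
    congr 1
    rw [pow_add]
    field_simp
  rw [key, key, hy i]

lemma dscale_preimage_dcell {d : ℕ} (k m : ℕ) (x : Fin d → ℝ) :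
    dscale k x ⁻¹' dcell m (dscale k x x) = dcell (k + m) x := by
  ext y
  simp only [dcell, Set.mem_preimage, Set.mem_ofPred_eq, label_dscale]
  exact forall_congr' fun i => by omega

lemma dscale_dscale {d : ℕ} (k m : ℕ) (x y : Fin d → ℝ) :
    dscale m (dscale k x x) (dscale k x y) = dscale (k + m) x y := by
  funext i
  simp only [dscale]
  have := label_dscale k m x x i
  simp only [dscale] at this
  rw [this]
  push_cast
  ring

/-- A component of a component is a component; the case of a null inner cell of `μ` is covered,
both sides then being the zero measure. -/
lemma component_component {d : ℕ} (k m : ℕ) (μ : Measure (Fin d → ℝ)) [IsProbabilityMeasure μ]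
    {x : Fin d → ℝ} (hx : μ (dcell k x) ≠ 0) :
    component (component μ k x) m (dscale k x x) = component μ (k + m) x := by
  have hk := measurable_dscale k x
  have hm := measurable_dscale m (dscale k x x)
  have hD := measurableSet_dcell m (dscale k x x)
  have h1 : component μ k x (dcell m (dscale k x x))
      = (μ (dcell k x))⁻¹ * μ (dcell (k + m) x) := by
    rw [component, Measure.smul_apply, Measure.map_apply hk hD,
      Measure.restrict_apply (hk hD), dscale_preimage_dcell,
      Set.inter_eq_left.2 (dcell_add_subset k m x), smul_eq_mul]
  ext s hs
  have h2 : dscale k x ⁻¹' (dscale m (dscale k x x) ⁻¹' s) = dscale (k + m) x ⁻¹' s := by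
    ext y; simp only [Set.mem_preimage, dscale_dscale]
  rw [component, h1, Measure.smul_apply, Measure.map_apply hm hs,
    Measure.restrict_apply (hm hs)]
  rw [component, Measure.smul_apply, Measure.map_apply hk ((hm hs).inter hD),
    Measure.restrict_apply (hk ((hm hs).inter hD)), Set.preimage_inter, h2, dscale_preimage_dcell,
    Set.inter_assoc, Set.inter_eq_left.2 (dcell_add_subset k m x)]
  rw [component, Measure.smul_apply, Measure.map_apply (measurable_dscale _ _) hs,
    Measure.restrict_apply (measurable_dscale _ _ hs)]
  simp only [smul_eq_mul]
  rw [ENNReal.mul_inv (Or.inl (ENNReal.inv_ne_zero.2 (measure_ne_top _ _)))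
    (Or.inl (ENNReal.inv_ne_top.2 hx)), inv_inv, mul_comm (μ (dcell k x)), mul_assoc,
    ← mul_assoc (μ (dcell k x)), ENNReal.mul_inv_cancel hx (measure_ne_top _ _), one_mul]

lemma magn_magn {d : ℕ} (k m : ℕ) {p : ProbabilityMeasure (Fin d → ℝ) × (Fin d → ℝ)}
    (hx : (p.1 : Measure (Fin d → ℝ)) (dcell k p.2) ≠ 0) :
    magn m (magn k p) = magn (k + m) p := by
  refine Prod.ext ?_ (dscale_dscale k m p.2 p.2)
  simp only [magn]
  rw [componentP_coe k _ hx]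
  rw [componentP_eq_toProb, componentP_eq_toProb, component_component k m _ hx]

lemma ae_dcell_ne_zero {d : ℕ} (k : ℕ) (μ : Measure (Fin d → ℝ)) :
    ∀ᵐ x ∂μ, μ (dcell k x) ≠ 0 := by
  have : ∀ j : Fin d → ℤ, ∀ᵐ x ∂μ, label k x = j → μ (label k ⁻¹' {j}) ≠ 0 := by
    intro j
    by_cases h0 : μ (label k ⁻¹' {j}) = 0
    · filter_upwards [measure_eq_zero_iff_ae_notMem.1 h0] with x hx hj
      exact absurd hj hx
    · exact Eventually.of_forall fun _ _ => h0
  filter_upwards [ae_all_iff.2 this] with x hx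
  rw [dcell_eq]
  exact hx _ rfl

/-! ### Adaptedness and invariance -/

lemma measurable_section {d : ℕ} {S : Set (ProbabilityMeasure (Fin d → ℝ) × (Fin d → ℝ))}
    (hS : MeasurableSet S) :
    Measurable fun ν : ProbabilityMeasure (Fin d → ℝ) =>
      (ν : Measure (Fin d → ℝ)) (Prod.mk ν ⁻¹' S) := by
  let κ : ProbabilityTheory.Kernel (ProbabilityMeasure (Fin d → ℝ)) (Fin d → ℝ) :=
    ⟨fun ν => (ν : Measure (Fin d → ℝ)), measurable_toMeasure⟩
  have : ProbabilityTheory.IsMarkovKernel κ := ⟨fun ν => ν.2⟩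
  exact ProbabilityTheory.Kernel.measurable_kernel_prodMk_left (κ := κ) hS

/-- Adaptedness as a disintegration formula. -/
lemma adapted_apply {d : ℕ} {Q : Measure (ProbabilityMeasure (Fin d → ℝ) × (Fin d → ℝ))}
    (hQ : IsCPDist Q) {S : Set (ProbabilityMeasure (Fin d → ℝ) × (Fin d → ℝ))}
    (hS : MeasurableSet S) :
    Q S = ∫⁻ ν, (ν : Measure (Fin d → ℝ)) (Prod.mk ν ⁻¹' S) ∂(Q.map Prod.fst) := by
  have hm : Measurable fun ν : ProbabilityMeasure (Fin d → ℝ) =>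
      (ν : Measure (Fin d → ℝ)).map fun x => (ν, x) := by
    refine Measure.measurable_of_measurable_coe _ fun s hs => ?_
    simp_rw [Measure.map_apply measurable_prodMk_left hs]
    exact measurable_section hs
  conv_lhs => rw [hQ.2.2.2]
  rw [Measure.bind_apply hS hm.aemeasurable]
  simp_rw [Measure.map_apply measurable_prodMk_left hS]

lemma ae_fst_dcell_ne_zero {d : ℕ}
    {Q : Measure (ProbabilityMeasure (Fin d → ℝ) × (Fin d → ℝ))} (hQ : IsCPDist Q) (k : ℕ) :
    ∀ᵐ p ∂Q, (p.1 : Measure (Fin d → ℝ)) (dcell k p.2) ≠ 0 := by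
  have h : Measurable fun p : ProbabilityMeasure (Fin d → ℝ) × (Fin d → ℤ) =>
      (p.1 : Measure (Fin d → ℝ)) (label k ⁻¹' {p.2}) :=
    measurable_from_prod_countable_left fun j =>
      (Measure.measurable_coe (measurable_label k (measurableSet_singleton j))).comp
        measurable_toMeasure
  have h2 : MeasurableSet {p : ProbabilityMeasure (Fin d → ℝ) × (Fin d → ℝ) |
      (p.1 : Measure (Fin d → ℝ)) (dcell k p.2) = 0} := by
    simp_rw [dcell_eq]
    exact (h.comp (measurable_fst.prodMk ((measurable_label k).comp measurable_snd)))
      (measurableSet_singleton 0)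
  have h3 : Q {p | (p.1 : Measure (Fin d → ℝ)) (dcell k p.2) = 0} = 0 := by
    rw [adapted_apply hQ h2]
    refine (lintegral_congr fun ν => ?_).trans lintegral_zero
    rw [measure_eq_zero_iff_ae_notMem]
    exact ae_dcell_ne_zero k _
  filter_upwards [measure_eq_zero_iff_ae_notMem.1 h3] with p hp using hp

/-- Magnification by any positive number of steps preserves a CP-distribution. -/
lemma map_magn_succ {d : ℕ} {Q : Measure (ProbabilityMeasure (Fin d → ℝ) × (Fin d → ℝ))}
    (hQ : IsCPDist Q) (k : ℕ) : Q.map (magn (k + 1)) = Q := by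
  have h1 : Q.map (magn 1) = Q := hQ.2.2.1
  induction k with
  | zero => exact h1
  | succ k ih =>
    have hae : magn (k + 1 + 1) =ᵐ[Q] magn 1 ∘ magn (k + 1) := by
      filter_upwards [ae_fst_dcell_ne_zero hQ (k + 1)] with p hp using (magn_magn _ _ hp).symm
    rw [Measure.map_congr hae, ← Measure.map_map (measurable_magn 1) (measurable_magn _), ih, h1]

lemma measurable_negMulLog2 : Measurable negMulLog2 :=
  (ENNReal.measurable_toReal.mul
    ((Real.measurable_log.comp ENNReal.measurable_toReal).div_const _)).neg

lemma measurable_entSq (k : ℕ) :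
    Measurable fun ν : ProbabilityMeasure (Fin 2 → ℝ) => entSq (ν : Measure (Fin 2 → ℝ)) k :=
  Finset.measurable_sum _ fun j _ => measurable_negMulLog2.comp
    ((Measure.measurable_coe (measurable_label k (measurableSet_singleton j))).comp
      measurable_toMeasure)

lemma measurable_entInt (θ : ℝ) (k : ℕ) :
    Measurable fun ν : ProbabilityMeasure (Fin 2 → ℝ) =>
      entInt ((ν : Measure (Fin 2 → ℝ)).map (projDir θ)) k :=
  Finset.measurable_sum _ fun j _ => measurable_negMulLog2.comp
    ((Measure.measurable_coe (measurable_floor_mul k (measurableSet_singleton j))).comp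
      ((Measure.measurable_map _ (measurable_projDir θ)).comp measurable_toMeasure))

/-- If measurable functionals `f l` of a `Q`-random measure converge `Q`-a.e. to `a`, then for
large `l` most measures `μ` have most of their level-`l` components `ν` with `f l ν` near `a`. -/
lemma exists_good_measures {d : ℕ}
    {Q : Measure (ProbabilityMeasure (Fin d → ℝ) × (Fin d → ℝ))} (hQ : IsCPDist Q)
    (f : ℕ → ProbabilityMeasure (Fin d → ℝ) → ℝ) (hf : ∀ l, Measurable (f l)) (a : ℝ)
    (hlim : ∀ᵐ p ∂Q, Tendsto (fun l => f l p.1) atTop (nhds a)) {ε η : ℝ} (hε : 0 < ε)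
    (hη : 0 < η) :
    ∃ l1 : ℕ, ∀ l, l1 ≤ l → ∃ A : Set (ProbabilityMeasure (Fin d → ℝ)), MeasurableSet A ∧
      Q.map Prod.fst Aᶜ ≤ ENNReal.ofReal (η / 4) ∧
      ∀ μ ∈ A, (μ : Measure (Fin d → ℝ))
        {x | ¬ |f l (componentP (μ : Measure (Fin d → ℝ)) l x) - a| ≤ ε} < ENNReal.ofReal η := by
  have := hQ.1
  have hin : TendstoInMeasure Q (fun l p => f l p.1) atTop (fun _ => a) :=
    tendstoInMeasure_of_tendsto_ae
      (fun l => ((hf l).comp measurable_fst).aestronglyMeasurable) hlim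
  have hin2 := tendstoInMeasure_iff_dist.1 hin ε hε
  have hpos : 0 < ENNReal.ofReal (η * (η / 4)) := ENNReal.ofReal_pos.2 (by positivity)
  obtain ⟨l0, hl0⟩ := eventually_atTop.1 (hin2.eventually_lt_const hpos)
  refine ⟨l0 + 1, fun l hl => ?_⟩
  obtain ⟨m, rfl⟩ : ∃ m, l = m + 1 := ⟨l - 1, by omega⟩
  set l := m + 1 with hlm
  have hB : MeasurableSet {ν : ProbabilityMeasure (Fin d → ℝ) | ¬ |f l ν - a| ≤ ε} :=
    (measurableSet_le ((hf l).sub_const a).abs measurable_const).compl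
  set R : Set (ProbabilityMeasure (Fin d → ℝ) × (Fin d → ℝ)) :=
    magn l ⁻¹' (Prod.fst ⁻¹' {ν | ¬ |f l ν - a| ≤ ε}) with hR
  have hRm : MeasurableSet R := measurable_magn l (measurable_fst hB)
  have hQR : Q R ≤ ENNReal.ofReal (η * (η / 4)) := by
    rw [hR, ← Measure.map_apply (measurable_magn l) (measurable_fst hB), hlm, map_magn_succ hQ]
    refine (measure_mono fun p hp => ?_).trans (hl0 l (by omega)).le
    simp only [Set.mem_preimage, Set.mem_ofPred_eq, not_le] at hp ⊢
    rw [Real.dist_eq]; exact hp.le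
  have hsec := measurable_section hRm
  refine ⟨{μ | (μ : Measure (Fin d → ℝ)) (Prod.mk μ ⁻¹' R) < ENNReal.ofReal η},
    hsec measurableSet_Iio, ?_, fun μ hμ => hμ⟩
  -- Markov's inequality for `μ ↦ μ(R_μ)`, whose mean is `Q R`.
  have hmark := mul_meas_ge_le_lintegral (μ := Q.map Prod.fst) hsec (ENNReal.ofReal η)
  rw [← adapted_apply hQ hRm] at hmark
  have h4 := hmark.trans hQR
  rw [ENNReal.ofReal_mul hη.le] at h4
  have h5 := (ENNReal.mul_le_mul_iff_right (ENNReal.ofReal_pos.2 hη).ne' ENNReal.ofReal_ne_top).1 h4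
  refine le_trans (measure_mono fun μ hμ => ?_) h5
  simpa using hμ

/-- Passage from a small exceptional set to a large good set. -/
lemma ofReal_lt_of_bad {X : Type*} [MeasurableSpace X] (μ : Measure X) [IsProbabilityMeasure μ]
    {G B : Set X} {ε η : ℝ} (hη : η ≤ 1) (hηε : η ≤ ε) (h : ∀ᵐ x ∂μ, x ∈ G ∨ x ∈ B)
    (hB : μ B < ENNReal.ofReal η) : ENNReal.ofReal (1 - ε) < μ G := by
  refine (ENNReal.ofReal_le_ofReal (by linarith : 1 - ε ≤ 1 - η)).trans_lt ?_
  by_contra hcon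
  have h1 : (1 : ℝ≥0∞) ≤ μ (G ∪ B) := by
    rw [← measure_univ (μ := μ)]
    exact measure_mono_ae (h.mono fun x hx _ => hx)
  have h2 : μ G + μ B < ENNReal.ofReal (1 - η) + ENNReal.ofReal η :=
    ENNReal.add_lt_add_of_le_of_lt (measure_ne_top _ _) (not_lt.1 hcon) hB
  have hη0 : 0 < η := ENNReal.ofReal_pos.1 (pos_of_gt hB)
  rw [← ENNReal.ofReal_add (by linarith) hη0.le] at h2
  simp only [sub_add_cancel, ENNReal.ofReal_one] at h2
  exact absurd (h1.trans (measure_union_le _ _)) (not_le.2 h2)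

/-- for an ergodic CP-distribution, most components at a large scale `l` have
normalized entropy close to `dim Q`, and likewise projected components close to `dim πQ`. -/
theorem stmt10 (Q : Measure (ProbabilityMeasure (Fin 2 → ℝ) × (Fin 2 → ℝ)))
    (hQ : IsCPDist Q) (herg : CPErgodic Q) (θ : ℝ) (α β : ℝ)
    (hα : ∀ᵐ p ∂Q, ExactDim (p.1 : Measure (Fin 2 → ℝ)) α)
    (hβ : ∀ᵐ p ∂Q, ExactDim ((p.1 : Measure (Fin 2 → ℝ)).map (projDir θ)) β) :
    ∀ ε : ℝ, 0 < ε → ∃ l1 : ℕ, ∀ l : ℕ, l1 ≤ l →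
      ∃ A : Set (ProbabilityMeasure (Fin 2 → ℝ)), MeasurableSet A ∧
        ENNReal.ofReal (1 - ε) < Q.map Prod.fst A ∧
        ∀ μ ∈ A,
          ENNReal.ofReal (1 - ε) <
            (μ : Measure (Fin 2 → ℝ))
              {x | α - ε ≤ (1 / (l : ℝ)) * entD (component (μ : Measure (Fin 2 → ℝ)) l x) l ∧
                (1 / (l : ℝ)) * entD (component (μ : Measure (Fin 2 → ℝ)) l x) l ≤ α + ε} ∧
          ENNReal.ofReal (1 - ε) <
            (μ : Measure (Fin 2 → ℝ))
              {x | β - ε ≤ (1 / (l : ℝ)) *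
                    ent1 ((component (μ : Measure (Fin 2 → ℝ)) l x).map (projDir θ)) l ∧
                (1 / (l : ℝ)) *
                    ent1 ((component (μ : Measure (Fin 2 → ℝ)) l x).map (projDir θ)) l ≤ β + ε} := by
  intro ε hε
  have := hQ.1
  set η : ℝ := min ε 1 with hη
  have hη0 : 0 < η := lt_min hε one_pos
  have hη1 : η ≤ 1 := min_le_right _ _
  have hηε : η ≤ ε := min_le_left _ _
  have hcube : ∀ᵐ p ∂Q, ∀ᵐ x ∂(p.1 : Measure (Fin 2 → ℝ)), x ∈ unitCube 2 := by
    filter_upwards [hQ.2.1] with p hp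
    exact (mem_ae_iff_prob_eq_one measurableSet_unitCube).2 hp.1
  obtain ⟨l1, h1⟩ := exists_good_measures hQ
    (fun l ν => (1 / (l : ℝ)) * entSq (ν : Measure (Fin 2 → ℝ)) l)
    (fun l => (measurable_entSq l).const_mul _) α
    (by filter_upwards [hα, hcube] with p hp hc using tendsto_entSq hc hp) hε hη0
  obtain ⟨l2, h2⟩ := exists_good_measures hQ
    (fun l ν => (1 / (l : ℝ)) * entInt ((ν : Measure (Fin 2 → ℝ)).map (projDir θ)) l)
    (fun l => (measurable_entInt θ l).const_mul _) β
    (by filter_upwards [hβ, hcube] with p hp hc using tendsto_entInt hc θ hp) hε hη0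
  refine ⟨max l1 l2, fun l hl => ?_⟩
  obtain ⟨A1, hA1, hQ1, hg1⟩ := h1 l ((le_max_left _ _).trans hl)
  obtain ⟨A2, hA2, hQ2, hg2⟩ := h2 l ((le_max_right _ _).trans hl)
  have hP : IsProbabilityMeasure (Q.map Prod.fst) :=
    Measure.isProbabilityMeasure_map measurable_fst.aemeasurable
  refine ⟨A1 ∩ A2, hA1.inter hA2, ?_, fun μ hμ => ⟨?_, ?_⟩⟩
  · refine ofReal_lt_of_bad (Q.map Prod.fst) (B := (A1 ∩ A2)ᶜ) hη1 hηε
      (Eventually.of_forall fun μ => em _) ?_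
    rw [Set.compl_inter]
    refine (measure_union_le _ _).trans_lt ((add_le_add hQ1 hQ2).trans_lt ?_)
    rw [← ENNReal.ofReal_add (by positivity) (by positivity)]
    exact (ENNReal.ofReal_lt_ofReal_iff hη0).2 (by linarith)
  · refine ofReal_lt_of_bad (μ : Measure (Fin 2 → ℝ)) hη1 hηε ?_ (hg1 μ hμ.1)
    filter_upwards [ae_dcell_ne_zero l (μ : Measure (Fin 2 → ℝ))] with x hx
    rw [componentP_coe l _ hx, entD_eq_entSq (component_unitCube l _ x), abs_le]
    by_cases hgood : α - ε ≤ 1 / (l : ℝ) * entSq (component (μ : Measure (Fin 2 → ℝ)) l x) l ∧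
        1 / (l : ℝ) * entSq (component (μ : Measure (Fin 2 → ℝ)) l x) l ≤ α + ε
    · exact Or.inl hgood
    · exact Or.inr fun h => hgood ⟨by linarith [h.1], by linarith [h.2]⟩
  · refine ofReal_lt_of_bad (μ : Measure (Fin 2 → ℝ)) hη1 hηε ?_ (hg2 μ hμ.2)
    filter_upwards [ae_dcell_ne_zero l (μ : Measure (Fin 2 → ℝ))] with x hx
    rw [componentP_coe l _ hx, ent1_eq_entInt (component_unitCube l _ x), abs_le]
    by_cases hgood : β - ε ≤ 1 / (l : ℝ) *
          entInt ((component (μ : Measure (Fin 2 → ℝ)) l x).map (projDir θ)) l ∧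
        1 / (l : ℝ) *
          entInt ((component (μ : Measure (Fin 2 → ℝ)) l x).map (projDir θ)) l ≤ β + ε
    · exact Or.inl hgood
    · exact Or.inr fun h => hgood ⟨by linarith [h.1], by linarith [h.2]⟩

end
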